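/- arXiv:1812.10415 — 3 statements merged into one kernel-verified Lean document; each statement's English description precedes it below -/
import Mathlib

section
/- Let q be a prime with q ≡ 3 (mod 4) and let D be a nonzero element of the finite field 𝔽_q. Then the elliptic curve over 𝔽_q with Weierstrass equation y² = x³ + D·x has exactly q + 1 points over 𝔽_q (counting the point at infinity). -/
/-- The elliptic curve `y² = x³ + D·x` over the finite field `𝔽_q = ZMod q`. -/
def EDcurveFq (q : ℕ) (D : ZMod q) : WeierstrassCurve.Affine (ZMod q) := ⟨0, 0, 0, D, 0⟩

/-!
If `-1` is not a square in `F`, the quadratic character `χ` is odd. Each abscissa `x` carries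
`1 + χ (x³ + D x)` affine points, and the deviations `χ (x³ + D x)` cancel between `x` and `-x`
because `x³ + D x` is odd. So there are as many affine points as elements of `F`.
-/

section QuadraticChar

variable {F : Type*} [Field F]

theorem ringChar_ne_two_of_not_isSquare_neg_one [Finite F] (h : ¬IsSquare (-1 : F)) :
    ringChar F ≠ 2 :=
  fun hF => h (FiniteField.isSquare_of_char_two hF (-1))

theorem quadraticChar_odd_of_not_isSquare_neg_one [Fintype F] [DecidableEq F]
    (h : ¬IsSquare (-1 : F)) : Function.Odd (quadraticChar F) := fun a => by
  rw [neg_eq_neg_one_mul, map_mul, quadraticChar_neg_one_iff_not_isSquare.mpr h, neg_one_mul]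

variable {α : Type*} [Fintype α]

theorem card_sq_eq_add_sum_quadraticChar [Fintype F] [DecidableEq F] (hF : ringChar F ≠ 2)
    (f : α → F) :
    (Nat.card {p : α × F // p.2 ^ 2 = f p.1} : ℤ) =
      Fintype.card α + ∑ x, quadraticChar F (f x) := by
  have card_fiber (x : α) :
      (Nat.card {y : F // y ^ 2 = f x} : ℤ) = 1 + quadraticChar F (f x) := by
    rw [add_comm, ← quadraticChar_card_sqrts hF, Set.toFinset_card, ← Nat.card_eq_fintype_card]
    rfl
  rw [Nat.card_congr (Equiv.subtypeProdEquivSigmaSubtype fun x y => y ^ 2 = f x), Nat.card_sigma]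
  simp only [Nat.cast_sum, card_fiber, Finset.sum_add_distrib, Finset.sum_const,
    Finset.card_univ, nsmul_one]

theorem card_sq_eq_of_odd [Finite F] [InvolutiveNeg α] (h : ¬IsSquare (-1 : F))
    {f : α → F} (hf : f.Odd) : Nat.card {p : α × F // p.2 ^ 2 = f p.1} = Fintype.card α := by
  classical
  have := Fintype.ofFinite F
  have sum_eq_zero : ∑ x, quadraticChar F (f x) = 0 :=
    ((quadraticChar_odd_of_not_isSquare_neg_one h).comp_odd hf).sum_eq_zero
  have card_eq := card_sq_eq_add_sum_quadraticChar (ringChar_ne_two_of_not_isSquare_neg_one h) f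
  rw [sum_eq_zero, add_zero] at card_eq
  exact_mod_cast card_eq

end QuadraticChar

section WeierstrassCurve

variable {R : Type*} [CommRing R]

theorem card_point_eq_card_equation_add_one [Nontrivial R] [Finite R]
    (W : WeierstrassCurve.Affine R) [W.IsElliptic] :
    Nat.card W.Point = Nat.card {p : R × R // W.Equation p.1 p.2} + 1 :=
  (Nat.card_congr W.pointEquiv).trans Finite.card_option

/-- The curve `y² = x³ + D·x` over an arbitrary commutative ring, extending `EDcurveFq` beyond the
prime fields. -/
def EDcurve (D : R) : WeierstrassCurve.Affine R := ⟨0, 0, 0, D, 0⟩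

theorem EDcurve.equation_iff (D x y : R) :
    (EDcurve D).Equation x y ↔ y ^ 2 = x ^ 3 + D * x := by
  simp [EDcurve, WeierstrassCurve.Affine.equation_iff]

theorem EDcurve.Δ_eq (D : R) : (EDcurve D).Δ = -(2 ^ 6 * D ^ 3) := by
  simp only [EDcurve, WeierstrassCurve.Δ, WeierstrassCurve.b₂, WeierstrassCurve.b₄,
    WeierstrassCurve.b₆, WeierstrassCurve.b₈]
  ring

theorem EDcurve.isElliptic_iff (D : R) :
    (EDcurve D).IsElliptic ↔ IsUnit (2 : R) ∧ IsUnit D := by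
  rw [WeierstrassCurve.isElliptic_iff, EDcurve.Δ_eq, IsUnit.neg_iff, IsUnit.mul_iff,
    isUnit_pow_iff (by decide), isUnit_pow_iff (by decide)]

end WeierstrassCurve

theorem stmt2_general {F : Type*} [Field F] [Fintype F] (hF : Fintype.card F % 4 = 3) {D : F}
    (hD : D ≠ 0) : Nat.card (EDcurve D).Point = Fintype.card F + 1 := by
  have neg_one_not_square : ¬IsSquare (-1 : F) := fun h => FiniteField.isSquare_neg_one_iff.mp h hF
  have isUnit_two : IsUnit (2 : F) :=
    (Ring.two_ne_zero (ringChar_ne_two_of_not_isSquare_neg_one neg_one_not_square)).isUnit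
  have : (EDcurve D).IsElliptic := (EDcurve.isElliptic_iff D).mpr ⟨isUnit_two, hD.isUnit⟩
  have cubic_odd : Function.Odd fun x : F => x ^ 3 + D * x := fun x => by ring
  simp only [card_point_eq_card_equation_add_one, EDcurve.equation_iff,
    card_sq_eq_of_odd neg_one_not_square cubic_odd]

/-- For a prime `q ≡ 3 (mod 4)` and `D ≠ 0` in `𝔽_q`, the elliptic curve
`y² = x³ + D·x` has exactly `q + 1` points over `𝔽_q` (counting the point at infinity). -/
theorem stmt2 (q : ℕ) [Fact q.Prime] (hq : q % 4 = 3) (D : ZMod q) (hD : D ≠ 0) :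
    Nat.card (EDcurveFq q D).Point = q + 1 := by
  rw [← ZMod.card q] at hq
  exact (stmt2_general hq hD).trans (by rw [ZMod.card])
end

section
/- Let p be a prime with p ≡ 3 (mod 8) or p ≡ 5 (mod 8). Then there are no z, w in the field ℚ_p of p-adic numbers satisfying w² = 2 − 2·p·z⁴. -/
/-!
Write `w² = 2 + (-2p)(z²)²`. The second summand is zero or has odd `p`-adic valuation. If that
valuation is negative, then it is also the valuation of `w²`, which is even. Otherwise the summand
is divisible by `p`, and reducing modulo `p` makes `2` a quadratic residue, against the
supplementary law of quadratic reciprocity.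
-/

section

variable {p : ℕ} [Fact p.Prime]

theorem padic_valuation_eq_of_norm_eq {x y : ℚ_[p]} (h : ‖x‖ = ‖y‖) :
    x.valuation = y.valuation := by
  have hp : (1 : ℝ) < p := mod_cast (Fact.out : p.Prime).one_lt
  rcases eq_or_ne x 0 with rfl | hx
  · rw [norm_eq_zero.1 (h.symm.trans norm_zero)]
  · have hy : y ≠ 0 := norm_ne_zero_iff.1 (h ▸ norm_ne_zero_iff.2 hx)
    rw [Padic.norm_eq_zpow_neg_valuation hx, Padic.norm_eq_zpow_neg_valuation hy] at h
    exact neg_injective (zpow_right_injective₀ (by positivity) hp.ne' h)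

theorem padic_valuation_add_eq_right {x y : ℚ_[p]} (h : ‖x‖ < ‖y‖) :
    (x + y).valuation = y.valuation :=
  padic_valuation_eq_of_norm_eq <| by rw [Padic.add_eq_max_of_ne h.ne, max_eq_right h.le]

theorem even_padic_valuation_of_isSquare {x : ℚ_[p]} (h : IsSquare x) : Even x.valuation := by
  obtain ⟨y, rfl⟩ := (isSquare_iff_exists_sq _).1 h
  rw [Padic.valuation_pow]
  exact even_two_mul _

theorem odd_padic_valuation_mul_sq {a t : ℚ_[p]} (ha : Odd a.valuation) (ht : t ≠ 0) :
    Odd (a * t ^ 2).valuation := by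
  have ha₀ : a ≠ 0 := by
    rintro rfl
    simp at ha
  rw [Padic.valuation_mul ha₀ (pow_ne_zero 2 ht), Padic.valuation_pow]
  exact ha.add_even (even_two_mul _)

theorem padic_valuation_intCast_mul_p {m : ℤ} (hm : ¬ (p : ℤ) ∣ m) :
    (m * p : ℚ_[p]).valuation = 1 := by
  have hm₀ : (m : ℚ_[p]) ≠ 0 := by
    intro h
    exact hm (Int.cast_eq_zero.1 h ▸ dvd_zero _)
  have hp₀ : (p : ℚ_[p]) ≠ 0 := mod_cast (Fact.out : p.Prime).ne_zero
  rw [Padic.valuation_mul hm₀ hp₀, Padic.valuation_intCast, padicValInt.eq_zero_of_not_dvd hm,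
    Padic.valuation_p, Nat.cast_zero, zero_add]

theorem padicInt_isSquare_of_isSquare_coe {x : ℤ_[p]} (h : IsSquare (x : ℚ_[p])) :
    IsSquare x := by
  obtain ⟨w, hw⟩ := (isSquare_iff_exists_sq _).1 h
  obtain ⟨y, rfl⟩ : ∃ y : ℤ_[p], algebraMap ℤ_[p] ℚ_[p] y = w :=
    IsIntegrallyClosed.exists_algebraMap_eq_of_isIntegral_pow two_pos
      (hw ▸ isIntegral_algebraMap (x := x))
  exact (isSquare_iff_exists_sq _).2 ⟨y, Subtype.ext <| by simpa using hw⟩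

theorem toZMod_eq_zero_of_valuation_ne_zero {x : ℤ_[p]} (h : x.valuation ≠ 0) :
    PadicInt.toZMod x = 0 := by
  rw [← RingHom.mem_ker, PadicInt.ker_toZMod, IsLocalRing.mem_maximalIdeal, PadicInt.mem_nonunits]
  refine (PadicInt.norm_le_one x).lt_of_ne fun hx => h ?_
  have hx' : ‖(x : ℚ_[p])‖ = ‖(1 : ℚ_[p])‖ := by simpa using hx
  simpa using padic_valuation_eq_of_norm_eq hx'

theorem norm_le_one_of_isSquare_coe_add {u : ℤ_[p]} {b : ℚ_[p]} (hb : Odd b.valuation)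
    (h : IsSquare (u + b)) : ‖b‖ ≤ 1 := by
  by_contra! hb₁
  have heven := even_padic_valuation_of_isSquare h
  rw [padic_valuation_add_eq_right ((PadicInt.norm_le_one u).trans_lt hb₁)] at heven
  exact Int.not_even_iff_odd.2 hb heven

theorem isSquare_toZMod_of_isSquare_coe_add {u : ℤ_[p]} {b : ℚ_[p]} (hb : Odd b.valuation)
    (h : IsSquare (u + b)) : IsSquare (PadicInt.toZMod u) := by
  obtain ⟨b, rfl⟩ : ∃ c : ℤ_[p], (c : ℚ_[p]) = b :=
    ⟨⟨b, norm_le_one_of_isSquare_coe_add hb h⟩, rfl⟩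
  have hb₀ : PadicInt.toZMod b = 0 := toZMod_eq_zero_of_valuation_ne_zero fun hv => by
    simp [hv] at hb
  have hsq : IsSquare (u + b) := padicInt_isSquare_of_isSquare_coe (mod_cast h)
  simpa [hb₀] using hsq.map PadicInt.toZMod

theorem isSquare_toZMod_of_isSquare_coe_add_mul_sq {u : ℤ_[p]} {a t : ℚ_[p]}
    (ha : Odd a.valuation) (h : IsSquare (u + a * t ^ 2)) : IsSquare (PadicInt.toZMod u) := by
  rcases eq_or_ne t 0 with rfl | ht
  · exact (padicInt_isSquare_of_isSquare_coe (by simpa using h)).map PadicInt.toZMod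
  · exact isSquare_toZMod_of_isSquare_coe_add (odd_padic_valuation_mul_sq ha ht) h

end

/-- For a prime `p ≡ 3` or `5 (mod 8)`, the equation `w² = 2 − 2·p·z⁴` has no
solutions in the field `ℚ_p` of `p`-adic numbers. -/
theorem stmt9 (p : ℕ) [Fact p.Prime] (h : p % 8 = 3 ∨ p % 8 = 5) :
    ¬ ∃ z w : ℚ_[p], w ^ 2 = 2 - 2 * (p : ℚ_[p]) * z ^ 4 := by
  rintro ⟨z, w, hzw⟩
  have hp₂ : p ≠ 2 := by omega
  have hdvd : ¬ (p : ℤ) ∣ -2 := by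
    rw [Int.dvd_neg]
    exact_mod_cast mt (Nat.prime_dvd_prime_iff_eq Fact.out Nat.prime_two).1 hp₂
  have hodd : Odd (((-2 : ℤ) : ℚ_[p]) * p).valuation := by
    rw [padic_valuation_intCast_mul_p hdvd]
    exact odd_one
  have hsq : IsSquare (((2 : ℤ_[p]) : ℚ_[p]) + ((-2 : ℤ) : ℚ_[p]) * p * (z ^ 2) ^ 2) := by
    refine (isSquare_iff_exists_sq _).2 ⟨w, ?_⟩
    rw [hzw, show ((2 : ℤ_[p]) : ℚ_[p]) = 2 from rfl]
    push_cast
    ring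
  have htwo : IsSquare (2 : ZMod p) := by
    simpa only [map_ofNat] using isSquare_toZMod_of_isSquare_coe_add_mul_sq hodd hsq
  have := (ZMod.exists_sq_eq_two_iff hp₂).1 htwo
  omega
end

section
/- Let p be a prime with p ≡ 1 (mod 8) such that 2 is not a quartic residue modulo p (i.e., there is no x with x⁴ ≡ 2 (mod p)). Then the equation w² = 4·p·z⁴ − 1 has solutions with z, w ∈ ℝ, has solutions with z, w ∈ ℚ₂, and has solutions with z, w ∈ ℚ_p, but has no solutions with z, w ∈ ℚ. In particular, the Hasse principle fails for the curve w² = 4pz⁴ − 1. -/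
/-! If `w² = 4pz⁴ - 1` has a rational point, clearing denominators gives natural numbers `m, t, r`
with `r` odd and coprime to `t` such that `m² + 4t⁴ = pr⁴`. Put `n = m + 2t²`, which is odd, and
compute its quadratic character modulo `p = 8k + 1` in two ways. Since `pr⁴ ≡ 2(2t²)² [mod n]` and
`n² ≡ p [mod 16]`, quadratic reciprocity and the second supplementary law give
`(n/p) = (p/n) = (2/n) = (-1)^k`. On the other hand `m² ≡ -4t⁴ [mod p]` yields
`n⁴ ≡ -4(2t²)⁴ [mod p]`, and as `2t²` is a square modulo `p`, Euler's criterion gives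
`(n/p) ≡ n^(4k) ≡ (-4)^k [mod p]`. Hence `2^(2k) ≡ 1 [mod p]`, so `2` is a quartic residue. -/

open NumberTheorySymbols

section LocalSolutions

lemma exists_sq_eq_mul_pow_four_sub_one_real {a : ℝ} (ha : 0 < a) :
    ∃ z w : ℝ, w ^ 2 = a * z ^ 4 - 1 := by
  have hz : √√a⁻¹ ^ 4 = a⁻¹ := by
    rw [pow_mul _ 2 2, Real.sq_sqrt (Real.sqrt_nonneg _), Real.sq_sqrt (inv_nonneg.2 ha.le)]
  exact ⟨√√a⁻¹, 0, by rw [hz, mul_inv_cancel₀ ha.ne', sub_self, zero_pow two_ne_zero]⟩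

variable {q : ℕ} [Fact q.Prime]

lemma isSquare_padicInt_of_norm_sq_sub_lt {d a : ℤ_[q]} (h : ‖a ^ 2 - d‖ < ‖2 * a‖ ^ 2) :
    IsSquare d := by
  obtain ⟨z, hz, -⟩ := hensels_lemma (R := ℤ_[q]) (F := Polynomial.X ^ 2 - Polynomial.C d) (a := a)
    (by simpa [one_add_one_eq_two] using h)
  have hzd : z ^ 2 - d = 0 := by simpa using hz
  exact ⟨z, by rw [← sq, sub_eq_zero.1 hzd]⟩

lemma isSquare_padicInt_of_isSquare_toZMod (hq : q ≠ 2) {d : ℤ_[q]}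
    (hd0 : PadicInt.toZMod d ≠ 0) (hd : IsSquare (PadicInt.toZMod d)) : IsSquare d := by
  obtain ⟨b, hb⟩ := hd
  obtain ⟨a, rfl⟩ := ZMod.ringHom_surjective (PadicInt.toZMod (p := q)) b
  have norm_lt_one_iff (x : ℤ_[q]) : ‖x‖ < 1 ↔ PadicInt.toZMod x = 0 := by
    rw [← PadicInt.not_isUnit_iff, ← mem_nonunits_iff, ← IsLocalRing.mem_maximalIdeal,
      ← PadicInt.ker_toZMod, RingHom.mem_ker]
  have h2a : ‖2 * a‖ = 1 := by
    refine (PadicInt.norm_le_one _).eq_of_not_lt fun hlt => ?_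
    have h2 : (2 : ZMod q) ≠ 0 := Ring.two_ne_zero (by rwa [ZMod.ringChar_zmod_n])
    have ha : PadicInt.toZMod a ≠ 0 := left_ne_zero_of_mul (hb ▸ hd0)
    rw [norm_lt_one_iff, map_mul, map_ofNat] at hlt
    exact mul_ne_zero h2 ha hlt
  apply isSquare_padicInt_of_norm_sq_sub_lt (a := a)
  rw [h2a, one_pow, norm_lt_one_iff, map_sub, map_pow, hb, sq, sub_self]

lemma isSquare_padicInt_two_of_eight_dvd_sub_one {d : ℤ_[2]} (hd : 8 ∣ d - 1) : IsSquare d := by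
  apply isSquare_padicInt_of_norm_sq_sub_lt (a := 1)
  have hle : ‖d - 1‖ ≤ (2 : ℝ) ^ (-3 : ℤ) := by
    refine (PadicInt.norm_le_pow_iff_mem_span_pow (d - 1) 3).2 (Ideal.mem_span_singleton.2 ?_)
    norm_num [hd]
  have h2 : ‖(2 : ℤ_[2])‖ = 2⁻¹ := by simpa using PadicInt.norm_p (p := 2)
  rw [one_pow, mul_one, h2, norm_sub_rev]
  exact hle.trans_lt (by norm_num)

lemma exists_sq_eq_four_mul_pow_four_sub_one_padic_two {a : ℤ_[2]} (ha : 8 ∣ a - 1) :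
    ∃ z w : ℚ_[2], w ^ 2 = 4 * a * z ^ 4 - 1 := by
  have hdvd : 8 ∣ (a - 64) - 1 := by
    rw [sub_right_comm]
    exact dvd_sub ha ⟨8, by norm_num⟩
  obtain ⟨w, hw⟩ := isSquare_padicInt_two_of_eight_dvd_sub_one hdvd
  have hw : (a : ℚ_[2]) - 64 = w * w := mod_cast congrArg ((↑) : ℤ_[2] → ℚ_[2]) hw
  -- `z = 1 / 4` makes the right-hand side `(a - 64) / 8²`.
  exact ⟨1 / 4, w / 8, by linear_combination -(1 / 64) * hw⟩

lemma exists_sq_eq_mul_pow_four_sub_one_padic (hq : q % 4 = 1) (a : ℚ_[q]) :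
    ∃ z w : ℚ_[q], w ^ 2 = a * z ^ 4 - 1 := by
  have hsq : IsSquare (-1 : ℤ_[q]) := by
    refine isSquare_padicInt_of_isSquare_toZMod (by omega) (by simp) ?_
    rw [map_neg, map_one]
    exact ZMod.exists_sq_eq_neg_one_iff.2 (by omega)
  obtain ⟨w, hw⟩ := hsq.map (PadicInt.Coe.ringHom (p := q))
  rw [map_neg, map_one] at hw
  exact ⟨0, w, by linear_combination -hw⟩

end LocalSolutions

section PowerResidues

lemma exists_pow_eq_of_pow_eq_one {G : Type*} [Group G] [Finite G] [IsCyclic G] {n m : ℕ}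
    (hG : n * m = Nat.card G) {a : G} (ha : a ^ m = 1) : ∃ b : G, b ^ n = a := by
  obtain ⟨g, hg⟩ := IsCyclic.exists_generator (α := G)
  obtain ⟨j, rfl⟩ := mem_powers_iff_mem_zpowers.2 (hg a)
  have hdvd : n * m ∣ j * m := by
    rw [hG, ← orderOf_eq_card_of_forall_mem_zpowers hg]
    exact orderOf_dvd_of_pow_eq_one (by rwa [pow_mul])
  have hm : 0 < m := Nat.pos_of_ne_zero (right_ne_zero_of_mul (hG ▸ Nat.card_pos.ne'))
  obtain ⟨c, rfl⟩ := Nat.dvd_of_mul_dvd_mul_right hm hdvd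
  exact ⟨g ^ c, by rw [← pow_mul, mul_comm]⟩

variable {F : Type*} [Field F]

lemma exists_pow_eq_of_pow_eq_one_of_finite_field [Finite F] {n m : ℕ}
    (hF : n * m = Nat.card F - 1) {a : F} (ha : a ^ m = 1) : ∃ b : F, b ^ n = a := by
  have hm : m ≠ 0 := right_ne_zero_of_mul (hF ▸ (Nat.sub_pos_of_lt Finite.one_lt_card).ne')
  obtain ⟨b, hb⟩ := exists_pow_eq_of_pow_eq_one (hF.trans (Nat.card_units F).symm)
    (Units.pow_ofPowEqOne ha hm)
  exact ⟨b, congrArg Units.val hb⟩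

lemma pow_card_div_two_of_pow_four_eq [Fintype F] (hF : Fintype.card F % 8 = 1) {x s : F}
    (hs : IsSquare s) (hs0 : s ≠ 0) (h : x ^ 4 = -4 * s ^ 4) :
    x ^ (Fintype.card F / 2) = (-1) ^ (Fintype.card F / 8) * 2 ^ (Fintype.card F / 4) := by
  obtain ⟨k, hk⟩ : ∃ k, Fintype.card F = 8 * k + 1 := ⟨Fintype.card F / 8, by omega⟩
  have hchar : ringChar F ≠ 2 := fun h2 => by
    have := FiniteField.even_card_of_char_two h2
    omega
  have hs1 := (FiniteField.isSquare_iff hchar hs0).1 hs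
  rw [show Fintype.card F / 2 = 4 * k by omega] at hs1 ⊢
  rw [show Fintype.card F / 8 = k by omega, show Fintype.card F / 4 = 2 * k by omega]
  calc x ^ (4 * k) = (-4 * s ^ 4) ^ k := by rw [pow_mul, h]
    _ = (-1) ^ k * 2 ^ (2 * k) * s ^ (4 * k) := by
        rw [show (-4 : F) = -1 * 2 ^ 2 by norm_num, mul_pow, mul_pow, pow_mul, pow_mul]
    _ = (-1) ^ k * 2 ^ (2 * k) := by rw [hs1, mul_one]

end PowerResidues

section JacobiSymbol

lemma jacobiSym_eq_of_mul_sq_modEq {a b x y : ℤ} {n : ℕ} (hx : IsCoprime x n)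
    (hy : IsCoprime y n) (h : a * x ^ 2 ≡ b * y ^ 2 [ZMOD n]) : J(a | n) = J(b | n) := by
  have hJ : J(a * x ^ 2 | n) = J(b * y ^ 2 | n) := jacobiSym.mod_left' h
  rwa [jacobiSym.mul_left, jacobiSym.mul_left,
    jacobiSym.sq_one' (Int.isCoprime_iff_gcd_eq_one.1 hx),
    jacobiSym.sq_one' (Int.isCoprime_iff_gcd_eq_one.1 hy), mul_one, mul_one] at hJ

/-- The customary exponent `(n² - 1) / 8` equals `n² / 8` with rounding division, as `n` is odd. -/
lemma jacobiSym_two_eq_neg_one_pow {n : ℕ} (hn : Odd n) : J(2 | n) = (-1) ^ (n ^ 2 / 8) := by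
  have hn2 := Nat.odd_iff.1 hn
  obtain ⟨k, r, hr, rfl⟩ : ∃ k r, r < 8 ∧ n = 8 * k + r := ⟨n / 8, n % 8, by omega, by omega⟩
  have hdiv : (8 * k + r) ^ 2 / 8 = 2 * (4 * k ^ 2 + k * r) + r ^ 2 / 8 := by
    rw [show (8 * k + r) ^ 2 = 8 * (2 * (4 * k ^ 2 + k * r)) + r ^ 2 by ring]
    omega
  rw [jacobiSym.at_two hn, ZMod.χ₈_nat_eq_if_mod_eight, if_neg (by omega), hdiv, pow_add, pow_mul,
    neg_one_sq, one_pow, one_mul, Nat.mul_add_mod, Nat.mod_eq_of_lt hr]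
  interval_cases r <;> omega

end JacobiSymbol

section Congruences

lemma pow_four_modEq_one_of_odd {n : ℕ} (hn : Odd n) : n ^ 4 ≡ 1 [MOD 16] := by
  obtain ⟨k, hk⟩ := Nat.eight_dvd_sq_sub_one_of_odd hn
  have hn2 : n ^ 2 = 8 * k + 1 := by
    have := pow_pos hn.pos 2
    omega
  rw [Nat.ModEq, show n ^ 4 = 16 * (4 * k ^ 2 + k) + 1 by rw [pow_mul n 2 2, hn2]; ring]
  omega

lemma even_and_even_of_four_dvd_sq_add_sq {a b : ℕ} (h : 4 ∣ a ^ 2 + b ^ 2) :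
    Even a ∧ Even b := by
  have sq_mod_four (x : ℕ) : x ^ 2 % 4 = x % 2 := by
    obtain ⟨y, rfl | rfl⟩ := x.even_or_odd'
    · rw [show (2 * y) ^ 2 = 4 * y ^ 2 by ring]
      omega
    · rw [show (2 * y + 1) ^ 2 = 4 * (y ^ 2 + y) + 1 by ring]
      omega
  have ha := sq_mod_four a
  have hb := sq_mod_four b
  rw [Nat.even_iff, Nat.even_iff]
  omega

end Congruences

section Descent

variable {p m t r : ℕ}

lemma exists_sq_add_four_mul_pow_four_eq_of_rat {z w : ℚ} (h : w ^ 2 = 4 * p * z ^ 4 - 1) :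
    ∃ m t r : ℕ, Odd r ∧ r.Coprime t ∧ m ^ 2 + 4 * t ^ 4 = p * r ^ 4 := by
  have hwz : (w * z.den ^ 2) ^ 2 = 4 * p * z.num ^ 4 - z.den ^ 4 := by
    rw [← Rat.mul_den_eq_num z]
    linear_combination (z.den : ℚ) ^ 4 * h
  obtain ⟨n, hn⟩ : IsSquare (4 * p * z.num ^ 4 - z.den ^ 4 : ℤ) :=
    Rat.isSquare_intCast_iff.1 ⟨w * z.den ^ 2, by rw [← sq, hwz]; push_cast; rfl⟩
  have hsum : n.natAbs ^ 2 + (z.den ^ 2) ^ 2 = 4 * (p * z.num.natAbs ^ 4) := by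
    zify
    rw [sq_abs, Even.pow_abs (by decide)]
    linear_combination -hn
  obtain ⟨hn_even, hden_even⟩ := even_and_even_of_four_dvd_sq_add_sq ⟨_, hsum⟩
  obtain ⟨m, hm⟩ := hn_even.two_dvd
  obtain ⟨t, ht⟩ := ((Nat.even_pow' two_ne_zero).1 hden_even).two_dvd
  have hcop : z.num.natAbs.Coprime (2 * t) := ht ▸ z.reduced
  refine ⟨m, t, z.num.natAbs, Nat.coprime_two_right.1 hcop.coprime_mul_right_right,
    hcop.coprime_mul_left_right, ?_⟩
  rw [hm, ht] at hsum
  linarith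

lemma odd_and_even_of_sq_add_four_mul_pow_four_eq (hp : p % 8 = 1) (hr : Odd r)
    (h : m ^ 2 + 4 * t ^ 4 = p * r ^ 4) : Odd m ∧ Even t := by
  have hpr : p * r ^ 4 % 8 = 1 := by
    have hr8 : r ^ 4 % 8 = 1 := (pow_four_modEq_one_of_odd hr).of_dvd (by norm_num)
    rw [Nat.mul_mod, hp, hr8]
  have hm : Odd m := by
    refine (Nat.odd_pow_iff two_ne_zero).1 (Nat.odd_iff.2 ?_)
    omega
  refine ⟨hm, Nat.not_odd_iff_even.1 fun ht => ?_⟩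
  have ht16 : t ^ 4 % 16 = 1 := pow_four_modEq_one_of_odd ht
  have hm8 := Nat.eight_dvd_sq_sub_one_of_odd hm
  omega

lemma coprime_of_sq_add_four_mul_pow_four_eq (hp : Squarefree p) (hrt : r.Coprime t)
    (h : m ^ 2 + 4 * t ^ 4 = p * r ^ 4) : m.Coprime t := by
  have hdvd : m.gcd t ^ 2 ∣ p * r ^ 4 := by
    rw [← h]
    have hm := pow_dvd_pow_of_dvd (m.gcd_dvd_left t) 2
    have ht := pow_dvd_pow_of_dvd (m.gcd_dvd_right t) 4
    exact dvd_add hm (((pow_dvd_pow _ (by norm_num)).trans ht).mul_left 4)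
  have hgr : (m.gcd t ^ 2).Coprime (r ^ 4) :=
    .pow _ _ (hrt.symm.coprime_dvd_left (m.gcd_dvd_right t))
  exact Nat.isUnit_iff.1 (hp _ (sq (m.gcd t) ▸ hgr.dvd_of_dvd_mul_right hdvd))

lemma add_two_mul_sq_sq_modEq (hp : p % 8 = 1) (hr : Odd r)
    (h : m ^ 2 + 4 * t ^ 4 = p * r ^ 4) : (m + 2 * t ^ 2) ^ 2 ≡ p [MOD 16] := by
  obtain ⟨s, rfl⟩ := (odd_and_even_of_sq_add_four_mul_pow_four_eq hp hr h).2.two_dvd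
  calc (m + 2 * (2 * s) ^ 2) ^ 2 = p * r ^ 4 + 16 * (m * s ^ 2) := by rw [← h]; ring
    _ ≡ p * r ^ 4 [MOD 16] := by simp [Nat.ModEq]
    _ ≡ p * 1 [MOD 16] := .mul_left p (pow_four_modEq_one_of_odd hr)
    _ = p := mul_one p

lemma jacobiSym_add_two_mul_sq_right (hm : Odd m) (hmt : m.Coprime t)
    (h : m ^ 2 + 4 * t ^ 4 = p * r ^ 4) :
    J(p | m + 2 * t ^ 2) = J(2 | m + 2 * t ^ 2) := by
  have htn : IsCoprime (2 * t ^ 2 : ℤ) (m + 2 * t ^ 2 : ℕ) := by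
    have : (2 * t ^ 2).Coprime (m + 2 * t ^ 2) := by
      rw [Nat.coprime_add_self_right]
      exact .mul_left (Nat.coprime_two_left.2 hm) (hmt.symm.pow_left 2)
    exact_mod_cast this.isCoprime
  have heq : (p * (r ^ 2) ^ 2 : ℤ)
      = 2 * (2 * t ^ 2) ^ 2 + (m + 2 * t ^ 2 : ℕ) * (m - 2 * t ^ 2) := by
    have h : (m ^ 2 + 4 * t ^ 4 : ℤ) = p * r ^ 4 := mod_cast h
    push_cast
    linear_combination -h
  have hrn : IsCoprime (r ^ 2 : ℤ) (m + 2 * t ^ 2 : ℕ) := by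
    have hpr : IsCoprime (p * (r ^ 2) ^ 2 : ℤ) (m + 2 * t ^ 2 : ℕ) := by
      rw [heq, IsCoprime.add_mul_left_left_iff]
      exact htn.of_mul_left_left.mul_left htn.pow_left
    exact (IsCoprime.pow_left_iff two_pos).1 hpr.of_mul_left_right
  apply jacobiSym_eq_of_mul_sq_modEq hrn htn
  rw [heq]
  simp [Int.ModEq]

lemma jacobiSym_add_two_mul_sq_left (hp : p % 8 = 1) (hr : Odd r) (hmt : m.Coprime t)
    (h : m ^ 2 + 4 * t ^ 4 = p * r ^ 4) : J((m + 2 * t ^ 2 : ℕ) | p) = (-1) ^ (p / 8) := by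
  have hm := (odd_and_even_of_sq_add_four_mul_pow_four_eq hp hr h).1
  have hn : Odd (m + 2 * t ^ 2) := hm.add_even (even_two_mul _)
  have hexp : (m + 2 * t ^ 2) ^ 2 / 8 % 2 = p / 8 % 2 := by
    have hn16 : (m + 2 * t ^ 2) ^ 2 % 16 = p % 16 := add_two_mul_sq_sq_modEq hp hr h
    omega
  calc J((m + 2 * t ^ 2 : ℕ) | p) = J(p | m + 2 * t ^ 2) :=
        (jacobiSym.quadratic_reciprocity_one_mod_four (by omega) hn).symm
    _ = J(2 | m + 2 * t ^ 2) := jacobiSym_add_two_mul_sq_right hm hmt h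
    _ = (-1) ^ ((m + 2 * t ^ 2) ^ 2 / 8) := jacobiSym_two_eq_neg_one_pow hn
    _ = (-1) ^ (p / 8) := by rw [neg_one_pow_eq_pow_mod_two, hexp, ← neg_one_pow_eq_pow_mod_two]

variable [Fact p.Prime]

lemma add_two_mul_sq_pow_div_two (hp : p % 8 = 1) (hmt : m.Coprime t)
    (h : (m ^ 2 + 4 * t ^ 4 : ZMod p) = 0) :
    (m + 2 * t ^ 2 : ZMod p) ^ (p / 2) = (-1) ^ (p / 8) * 2 ^ (p / 4) := by
  have ht : (t : ZMod p) ≠ 0 := fun ht => by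
    have hm : (m : ZMod p) = 0 := by simpa [ht] using h
    rw [ZMod.natCast_eq_zero_iff] at hm ht
    exact (Fact.out : p.Prime).ne_one (Nat.eq_one_of_dvd_coprimes hmt hm ht)
  have h2 : (2 : ZMod p) ≠ 0 := Ring.two_ne_zero (by rw [ZMod.ringChar_zmod_n]; omega)
  have hsq : IsSquare (2 * t ^ 2 : ZMod p) :=
    ((ZMod.exists_sq_eq_two_iff (by omega)).2 (.inl hp)).mul (.sq _)
  have hn4 : (m + 2 * t ^ 2 : ZMod p) ^ 4 = -4 * (2 * t ^ 2) ^ 4 := by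
    linear_combination (m ^ 2 + 8 * m * t ^ 2 + 20 * t ^ 4 : ZMod p) * h
  have hcard := ZMod.card p
  have hpow := pow_card_div_two_of_pow_four_eq (hcard.symm ▸ hp) hsq
    (mul_ne_zero h2 (pow_ne_zero 2 ht)) hn4
  rwa [hcard] at hpow

lemma exists_pow_four_eq_two_of_sq_add_four_mul_pow_four_eq (hp : p % 8 = 1) (hr : Odd r)
    (hrt : r.Coprime t) (h : m ^ 2 + 4 * t ^ 4 = p * r ^ 4) : ∃ d : ZMod p, d ^ 4 = 2 := by
  have hmt : m.Coprime t :=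
    coprime_of_sq_add_four_mul_pow_four_eq (Fact.out : p.Prime).prime.squarefree hrt h
  have h0 : (m ^ 2 + 4 * t ^ 4 : ZMod p) = 0 := by
    have hcast : (m ^ 2 + 4 * t ^ 4 : ZMod p) = p * r ^ 4 := mod_cast congrArg Nat.cast h
    rw [hcast, CharP.cast_eq_zero, zero_mul]
  have heuler : (-1 : ZMod p) ^ (p / 8) = (m + 2 * t ^ 2) ^ (p / 2) := by
    have heuler := legendreSym.eq_pow p (m + 2 * t ^ 2 : ℕ)
    rw [jacobiSym.legendreSym.to_jacobiSym, jacobiSym_add_two_mul_sq_left hp hr hmt h] at heuler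
    exact_mod_cast heuler
  have h2pow : (2 : ZMod p) ^ (p / 4) = 1 := by
    apply mul_left_cancel₀ (pow_ne_zero (p / 8) (neg_ne_zero.2 one_ne_zero))
    rw [← add_two_mul_sq_pow_div_two hp hmt h0, mul_one, heuler]
  exact exists_pow_eq_of_pow_eq_one_of_finite_field (by rw [Nat.card_zmod]; omega) h2pow

end Descent


/-- For a prime `p ≡ 1 (mod 8)` such that `2` is not a quartic residue modulo `p`,
the equation `w² = 4·p·z⁴ − 1` has solutions in `ℝ`, in `ℚ₂` and in `ℚ_p`, but none in `ℚ`: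
the Hasse principle fails for the curve `w² = 4pz⁴ − 1`. -/
theorem stmt15 (p : ℕ) [Fact p.Prime] (h1 : p % 8 = 1)
    (hq : ¬ ∃ x : ℤ, x ^ 4 ≡ 2 [ZMOD (p : ℤ)]) :
    (∃ z w : ℝ, w ^ 2 = 4 * (p : ℝ) * z ^ 4 - 1) ∧
    (∃ z w : ℚ_[2], w ^ 2 = 4 * (p : ℚ_[2]) * z ^ 4 - 1) ∧
    (∃ z w : ℚ_[p], w ^ 2 = 4 * (p : ℚ_[p]) * z ^ 4 - 1) ∧
    ¬ ∃ z w : ℚ, w ^ 2 = 4 * (p : ℚ) * z ^ 4 - 1 := by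
  have hp0 : (0 : ℝ) < p := mod_cast (Fact.out : p.Prime).pos
  have hp8 : (8 : ℤ_[2]) ∣ p - 1 := by
    have : (8 : ℤ) ∣ p - 1 := by omega
    exact_mod_cast map_dvd (Int.castRingHom ℤ_[2]) this
  refine ⟨exists_sq_eq_mul_pow_four_sub_one_real (by positivity),
    exists_sq_eq_four_mul_pow_four_sub_one_padic_two hp8,
    exists_sq_eq_mul_pow_four_sub_one_padic (by omega) _, ?_⟩
  rintro ⟨z, w, h⟩
  obtain ⟨m, t, r, hr, hrt, hmtr⟩ := exists_sq_add_four_mul_pow_four_eq_of_rat h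
  obtain ⟨d, hd⟩ := exists_pow_four_eq_two_of_sq_add_four_mul_pow_four_eq h1 hr hrt hmtr
  obtain ⟨x, rfl⟩ := ZMod.intCast_surjective d
  exact hq ⟨x, (ZMod.intCast_eq_intCast_iff _ _ _).1 (mod_cast hd)⟩
end
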